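/- arXiv:2004.10521 — 2 statements merged into one kernel-verified Lean document; each statement's English description precedes it below -/
import Mathlib

section
/- Assume (L,N) is graphically admissible and let O := nb_{H^1}(Y), the set of neighbours of Y in H^1. Then O satisfies the graphical adjustment criterion for A,Y,L,N in G. If, in addition, N ⊆ an_G({A,Y}∪L) or N = V, then for every set Z satisfying the graphical adjustment criterion: Y and Z\O are d-separated by {A} ∪ O in G, and A and O\Z are d-separated by Z in G. -/
open Relation Set

namespace CausalGraph

variable {V : Type*} [Fintype V] [DecidableEq V]

/-- `p` is a path in the undirected sense from `u` to `v` along adjacency `Adj`: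
a nonempty list of pairwise distinct vertices, consecutive ones adjacent,
starting at `u` and ending at `v`. -/
def IsPath (Adj : V → V → Prop) (u v : V) (p : List V) : Prop :=
  List.Chain' Adj p ∧ p.head? = some u ∧ p.getLast? = some v ∧ p.Nodup

/-- Ancestors of `S` in the digraph `D` (every vertex is an ancestor of itself). -/
def anc (D : V → V → Prop) (S : Set V) : Set V :=
  {u | ∃ v ∈ S, Relation.ReflTransGen D u v}

/-- Descendants of `S` in the digraph `D` (every vertex is a descendant of itself). -/
def desc (D : V → V → Prop) (S : Set V) : Set V :=
  {u | ∃ v ∈ S, Relation.ReflTransGen D v u}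

/-- Parents of vertices of `S` in the digraph `D`. -/
def parents (D : V → V → Prop) (S : Set V) : Set V :=
  {u | ∃ v ∈ S, D u v}

/-- The digraph `D` is acyclic. -/
def Acyclic (D : V → V → Prop) : Prop :=
  ∀ u v, D u v → ¬ Relation.ReflTransGen D v u

/-- Vertices other than `A` lying on a directed path from `A` to `Y`. -/
def cn (D : V → V → Prop) (A Y : V) : Set V :=
  {v | v ≠ A ∧ Relation.ReflTransGen D A v ∧ Relation.ReflTransGen D v Y}

/-- The forbidden set. -/
def forb (D : V → V → Prop) (A Y : V) : Set V :=
  desc D (cn D A Y) ∪ {A}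

/-- Proper back-door graph: delete every edge from `A` into `cn D A Y`. -/
def pbd (D : V → V → Prop) (A Y : V) : V → V → Prop :=
  fun u v => D u v ∧ ¬(u = A ∧ v ∈ cn D A Y)

/-- `y` is an interior vertex of the list `p` with neighbours `x` and `z` on the path. -/
def InteriorAt (p : List V) (x y z : V) : Prop :=
  ∃ s t : List V, p = s ++ x :: y :: z :: t

/-- The path `p` is blocked by `Z` in the digraph `D`: some interior non-collider
lies in `Z`, or some interior collider has no descendant in `Z`. -/
def Blocked (D : V → V → Prop) (Z : Set V) (p : List V) : Prop :=
  (∃ x y z, InteriorAt p x y z ∧ ¬(D x y ∧ D z y) ∧ y ∈ Z) ∨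
  (∃ x y z, InteriorAt p x y z ∧ (D x y ∧ D z y) ∧ ∀ d ∈ desc D {y}, d ∉ Z)

/-- d-separation of `S` and `T` given `Z` in the digraph `D`. -/
def DSep (D : V → V → Prop) (S T Z : Set V) : Prop :=
  ∀ s ∈ S, ∀ t ∈ T, ∀ p : List V,
    IsPath (fun a b => D a b ∨ D b a) s t p → Blocked D Z p

/-- Moral graph of the subgraph of the digraph `D` induced on `Vs`. -/
def moral (D : V → V → Prop) (Vs : Set V) : SimpleGraph V :=
  SimpleGraph.fromRel (fun u v =>
    u ∈ Vs ∧ v ∈ Vs ∧ (D u v ∨ D v u ∨ ∃ w ∈ Vs, D u w ∧ D v w))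

/-- Separation in an undirected graph: every path from `S` to `T` meets `W`. -/
def USep (H : SimpleGraph V) (S T W : Set V) : Prop :=
  ∀ s ∈ S, ∀ t ∈ T, ∀ p : List V, IsPath H.Adj s t p → ∃ z ∈ W, z ∈ p

/-- `Z` is an `A`–`Y` cut in an undirected graph `H` with vertex set `Vs`. -/
def IsCut (Vs : Set V) (H : SimpleGraph V) (A Y : V) (Z : Set V) : Prop :=
  Z ⊆ Vs ∧ Z ∩ {A, Y} = ∅ ∧ ∀ p : List V, IsPath H.Adj A Y p → ∃ z ∈ Z, z ∈ p

def MinimalCut (Vs : Set V) (H : SimpleGraph V) (A Y : V) (Z : Set V) : Prop :=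
  IsCut Vs H A Y Z ∧ ∀ Z' ⊂ Z, ¬ IsCut Vs H A Y Z'

def MinimumCut (Vs : Set V) (H : SimpleGraph V) (A Y : V) (Z : Set V) : Prop :=
  IsCut Vs H A Y Z ∧ ∀ Z', IsCut Vs H A Y Z' → Z.ncard ≤ Z'.ncard

/-- Connected component of `y` in `H` restricted to the complement of `U`:
vertices reachable from `y` by paths avoiding `U`. -/
def cc (H : SimpleGraph V) (U : Set V) (y : V) : Set V :=
  {w | ∃ p : List V, IsPath H.Adj y w p ∧ ∀ x ∈ p, x ∉ U}

/-- Boundary of `S` in `H`: vertices outside `S` adjacent to some vertex of `S`. -/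
def bdry (H : SimpleGraph V) (S : Set V) : Set V :=
  {v | v ∉ S ∧ ∃ u ∈ S, H.Adj v u}

/-- The partial order `Z₁ ⊴_H Z₂` between `A`–`Y` cuts. -/
def TLE (H : SimpleGraph V) (A Y : V) (Z₁ Z₂ : Set V) : Prop :=
  USep H {Y} (Z₂ \ Z₁) Z₁ ∧ USep H {A} (Z₁ \ Z₂) Z₂

/-- Ancestors of `{A, Y} ∪ L`. -/
def ancAYL (D : V → V → Prop) (A Y : V) (L : Set V) : Set V :=
  anc D ({A, Y} ∪ L)

/-- The moral graph `H⁰` of the proper back-door graph induced on `an_G({A,Y} ∪ L)`. -/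
def H0 (D : V → V → Prop) (A Y : V) (L : Set V) : SimpleGraph V :=
  moral (pbd D A Y) (ancAYL D A Y L)

/-- The set of vertices removed from `H⁰` when constructing `H¹`. -/
def Ignore (D : V → V → Prop) (A Y : V) (L N : Set V) : Set V :=
  (ancAYL D A Y L \ {A, Y}) ∩ ((Set.univ \ N) ∪ forb D A Y)

/-- Vertex set of `H¹`. -/
def H1verts (D : V → V → Prop) (A Y : V) (L N : Set V) : Set V :=
  ancAYL D A Y L \ Ignore D A Y L N

/-- The non-parametric adjustment efficiency graph `H¹`: delete the vertices of
`Ignore`, join two remaining vertices if they are joined in `H⁰` by a path all of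
whose intermediate vertices are in `Ignore`, and join `A` and `Y` to every vertex
of `L`. -/
def H1 (D : V → V → Prop) (A Y : V) (L N : Set V) : SimpleGraph V :=
  SimpleGraph.fromRel (fun u v =>
    u ∈ H1verts D A Y L N ∧ v ∈ H1verts D A Y L N ∧
      ((∃ p : List V, IsPath (H0 D A Y L).Adj u v p ∧
          ∀ x ∈ p, x ≠ u → x ≠ v → x ∈ Ignore D A Y L N) ∨
        (u = A ∧ v ∈ L) ∨ (u = Y ∧ v ∈ L)))

/-- The graphical adjustment criterion for `A, Y, L, N` in the DAG `D`. -/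
def GAC (D : V → V → Prop) (A Y : V) (L N Z : Set V) : Prop :=
  DSep (pbd D A Y) {A} {Y} Z ∧ Z ∩ forb D A Y = ∅ ∧ L ⊆ Z ∧ Z ⊆ N

def MinimalGAC (D : V → V → Prop) (A Y : V) (L N Z : Set V) : Prop :=
  GAC D A Y L N Z ∧ ∀ Z' ⊂ Z, ¬ GAC D A Y L N Z'

def MinimumGAC (D : V → V → Prop) (A Y : V) (L N Z : Set V) : Prop :=
  GAC D A Y L N Z ∧ ∀ Z', GAC D A Y L N Z' → Z.ncard ≤ Z'.ncard

/-- Graphical admissibility of the pair `(L, N)`. -/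
def Admissible (D : V → V → Prop) (A Y : V) (L N : Set V) : Prop :=
  ∃ Z, GAC D A Y L N Z

end CausalGraph

namespace CausalGraph

/-!
By the Bayes ball algorithm, d-separation is separation in the moral graph of an ancestral set, so
everything takes place in undirected graphs. Let `K` be the component of `Y` in `H⁰` when only `Y`
and ignored vertices may be visited. The set `O` contains every other vertex of `H⁰` adjacent to
`K`, so removing `O` from `H⁰` confines `Y` to `K`.

A set `Z` satisfying the criterion contains no ignored vertex. Hence `Z` does not separate `Y` from
any vertex of `O \ Z`: the paths through `K` survive. As `Z` separates `A` from `Y`, it follows that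
`A ∉ O`, so that `O` is valid, and that `Z` separates `A` from `O \ Z`. If `N` consists of ancestors
of `{A, Y} ∪ L`, separating `Y` from `Z \ O` is again a matter of `H⁰`. If `N` contains every
non-forbidden parent of a causal vertex, then each parent of a causal vertex is causal or lies in
`{A} ∪ O`, and `Y` is even confined to the causal vertices.
-/

section UndirectedPaths

variable {V : Type*} {H H' : SimpleGraph V} {U U' S : Set V} {u v w : V} {p : List V}

theorem isPath_adj_iff_exists_walk :
    IsPath H.Adj u v p ↔ ∃ q : H.Walk u v, q.IsPath ∧ q.support = p := by
  constructor
  · rintro ⟨hchain, hhead, hlast, hnodup⟩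
    have hne : p ≠ [] := by rintro rfl; simp at hhead
    obtain rfl : p.head hne = u := by simpa [List.head?_eq_some_head hne] using hhead
    obtain rfl : p.getLast hne = v := by simpa [List.getLast?_eq_some_getLast hne] using hlast
    have hsupport := SimpleGraph.Walk.support_ofSupport hne hchain
    exact ⟨.ofSupport p hne hchain, .mk' (hsupport.symm ▸ hnodup), hsupport⟩
  · rintro ⟨q, hq, rfl⟩
    exact ⟨q.isChain_adj_support, by simp [List.head?_eq_some_head],
      by simp [List.getLast?_eq_some_getLast], hq.support_nodup⟩

theorem mem_cc_iff_exists_walk :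
    v ∈ cc H U u ↔ ∃ q : H.Walk u v, ∀ x ∈ q.support, x ∉ U := by
  classical
  constructor
  · rintro ⟨p, hp, hU⟩
    obtain ⟨q, -, rfl⟩ := isPath_adj_iff_exists_walk.1 hp
    exact ⟨q, hU⟩
  · rintro ⟨q, hU⟩
    exact ⟨_, isPath_adj_iff_exists_walk.2 ⟨q.bypass, q.bypass_isPath, rfl⟩,
      fun x hx => hU x (q.support_bypass_subset_support hx)⟩

theorem mem_cc_self (hu : u ∉ U) : u ∈ cc H U u :=
  mem_cc_iff_exists_walk.2 ⟨.nil, by simpa using hu⟩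

theorem notMem_of_mem_cc (h : v ∈ cc H U u) : v ∉ U := by
  obtain ⟨q, hq⟩ := mem_cc_iff_exists_walk.1 h
  exact hq v q.end_mem_support

theorem mem_cc_symm (h : v ∈ cc H U u) : u ∈ cc H U v := by
  obtain ⟨q, hq⟩ := mem_cc_iff_exists_walk.1 h
  exact mem_cc_iff_exists_walk.2 ⟨q.reverse, by simpa using hq⟩

theorem mem_cc_trans (huv : v ∈ cc H U u) (hvw : w ∈ cc H U v) : w ∈ cc H U u := by
  obtain ⟨q, hq⟩ := mem_cc_iff_exists_walk.1 huv
  obtain ⟨r, hr⟩ := mem_cc_iff_exists_walk.1 hvw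
  refine mem_cc_iff_exists_walk.2 ⟨q.append r, fun x hx => ?_⟩
  exact ((q.mem_support_append_iff r).1 hx).elim (hq x) (hr x)

theorem mem_cc_of_adj (h : v ∈ cc H U u) (hvw : H.Adj v w) (hw : w ∉ U) : w ∈ cc H U u :=
  mem_cc_trans h <| mem_cc_iff_exists_walk.2
    ⟨hvw.toWalk, by simp [notMem_of_mem_cc h, hw]⟩

theorem cc_subset_of_closed (hu : u ∈ S)
    (hclosed : ∀ v ∈ S, ∀ w, H.Adj v w → v ∉ U → w ∉ U → w ∈ S) : cc H U u ⊆ S := by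
  intro v hv
  obtain ⟨q, hq⟩ := mem_cc_iff_exists_walk.1 hv
  clear hv
  induction q with
  | nil => exact hu
  | cons hadj q ih =>
    simp only [SimpleGraph.Walk.support_cons, List.forall_mem_cons] at hq
    exact ih (hclosed _ hu _ hadj hq.1 (hq.2 _ q.start_mem_support)) hq.2

theorem cc_subset_cc (hU : U' ⊆ U)
    (hadj : ∀ v w, v ∉ U → w ∉ U → H.Adj v w → H'.Adj v w) : cc H U u ⊆ cc H' U' u := by
  intro v hv
  have hu : u ∉ U := notMem_of_mem_cc (mem_cc_symm hv)
  exact cc_subset_of_closed (mem_cc_self fun h => hu (hU h))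
    (fun x hx y hxy hxU hyU => mem_cc_of_adj hx (hadj x y hxU hyU hxy) fun h => hyU (hU h)) hv

theorem cc_mono (hH : H ≤ H') (hU : U' ⊆ U) : cc H U u ⊆ cc H' U' u :=
  cc_subset_cc hU fun _ _ _ _ h => hH h

end UndirectedPaths

section Ancestors

variable {V : Type*} {D : V → V → Prop} {S T : Set V} {u v : V}

theorem mem_anc_of_reflTransGen (huv : ReflTransGen D u v) (hv : v ∈ anc D S) : u ∈ anc D S :=
  let ⟨w, hw, hvw⟩ := hv
  ⟨w, hw, huv.trans hvw⟩

theorem subset_anc : S ⊆ anc D S := fun u hu => ⟨u, hu, .refl⟩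

theorem anc_subset_anc (h : S ⊆ anc D T) : anc D S ⊆ anc D T := fun _ ⟨_, hv, huv⟩ =>
  mem_anc_of_reflTransGen huv (h hv)

theorem anc_mono (h : S ⊆ T) : anc D S ⊆ anc D T := anc_subset_anc (h.trans subset_anc)

theorem Acyclic.not_adj_symm (hD : Acyclic D) (huv : D u v) : ¬ D v u := fun hvu =>
  hD u v huv (.single hvu)

theorem Acyclic.eq_of_reflTransGen (hD : Acyclic D) (huv : ReflTransGen D u v)
    (hvu : ReflTransGen D v u) : u = v := by
  rcases huv.cases_head with huv | ⟨w, huw, hwv⟩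
  · exact huv
  · exact absurd (hwv.trans hvu) (hD u w huw)

end Ancestors

section ActiveWalks

variable {V : Type*} {D : V → V → Prop} {Z : Set V} {s t u v w x y z : V}
  {a b c p : List V}

/-- The vertex `y` does not block a walk passing through `x, y, z` in this order: a collider must
be an ancestor of `Z`, and only colliders may lie in `Z`. -/
def ActiveAt (D : V → V → Prop) (Z : Set V) (x y z : V) : Prop :=
  (D x y ∧ D z y → y ∈ anc D Z) ∧ (y ∈ Z → D x y ∧ D z y)

/-- The vertex list `p` is a walk in the skeleton of `D`, possibly with repeated vertices, that is
not blocked by `Z`. -/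
def IsActiveWalk (D : V → V → Prop) (Z : Set V) (p : List V) : Prop :=
  p.IsChain (SymmGen D) ∧ ∀ x y z, [x, y, z] <:+: p → ActiveAt D Z x y z

theorem interiorAt_iff_infix : InteriorAt p x y z ↔ [x, y, z] <:+: p := by
  simp [InteriorAt, List.IsInfix, eq_comm]

theorem not_blocked_iff :
    ¬ Blocked D Z p ↔ ∀ x y z, [x, y, z] <:+: p → ActiveAt D Z x y z := by
  have hcollider (y : V) : y ∈ anc D Z ↔ ¬ ∀ d ∈ desc D {y}, d ∉ Z := by
    simp only [anc, desc, Set.mem_ofPred_eq, Set.mem_singleton_iff, exists_eq_left]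
    push Not
    simp only [and_comm]
  simp only [Blocked, interiorAt_iff_infix, ActiveAt, hcollider]
  grind

theorem isActiveWalk_singleton : IsActiveWalk D Z [x] :=
  ⟨.singleton x, fun _ _ _ h => absurd h.length_le (by simp)⟩

theorem isActiveWalk_pair_iff : IsActiveWalk D Z [x, y] ↔ SymmGen D x y := by
  refine ⟨fun h => by simpa using h.1, fun h => ⟨by simpa using h, fun _ _ _ h => ?_⟩⟩
  exact absurd h.length_le (by simp)

theorem isActiveWalk_cons_cons_cons_iff :
    IsActiveWalk D Z (x :: y :: z :: p) ↔
      SymmGen D x y ∧ ActiveAt D Z x y z ∧ IsActiveWalk D Z (y :: z :: p) := by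
  simp only [IsActiveWalk, List.infix_cons_iff (a := x), List.cons_prefix_cons,
    List.isChain_cons_cons (a := x)]
  grind

theorem isActiveWalk_append_cons_iff :
    IsActiveWalk D Z (a ++ v :: c) ↔ IsActiveWalk D Z (a ++ [v]) ∧ IsActiveWalk D Z (v :: c) ∧
      ∀ x ∈ a.getLast?, ∀ z ∈ c.head?, ActiveAt D Z x v z := by
  induction a with
  | nil => simp [isActiveWalk_singleton]
  | cons x a ih =>
    rcases a with _ | ⟨y, _ | ⟨z, a⟩⟩
    · rcases c with _ | ⟨z, c⟩
      · simp [isActiveWalk_singleton]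
      · simp only [List.cons_append, List.nil_append, isActiveWalk_cons_cons_cons_iff,
          isActiveWalk_pair_iff, List.getLast?_singleton, Option.mem_def, Option.some.injEq,
          List.head?_cons, forall_eq', and_congr_right_iff]
        tauto
    · simp only [List.cons_append, List.nil_append, List.getLast?_singleton, Option.mem_def,
        Option.some.injEq, forall_eq', isActiveWalk_cons_cons_cons_iff,
        List.getLast?_cons_cons] at ih ⊢
      tauto
    · simp only [List.cons_append, List.getLast?_cons_cons, Option.mem_def,
        isActiveWalk_cons_cons_cons_iff] at ih ⊢
      tauto

theorem IsActiveWalk.mem_anc_of_adj (hp : IsActiveWalk D Z (x :: y :: p)) (hxy : D x y)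
    (hlast : (y :: p).getLast? = some t) : y ∈ anc D ({t} ∪ Z) := by
  induction p generalizing x y with
  | nil => exact subset_anc (.inl (by simpa using hlast))
  | cons z p ih =>
    obtain ⟨-, hactive, hp⟩ := isActiveWalk_cons_cons_cons_iff.1 hp
    by_cases hzy : D z y
    · exact anc_mono subset_union_right (hactive.1 ⟨hxy, hzy⟩)
    · have hyz : D y z := (List.isChain_cons_cons.1 hp.1).1.resolve_right hzy
      exact mem_anc_of_reflTransGen (.single hyz) (ih hp hyz (by simpa using hlast))

-- If the loop leaves `v` by an edge `v → u`, acyclicity prevents it from returning to `v` along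
-- directed edges only, so it meets a collider below `v`, and `v` is an ancestor of `Z`.
theorem IsActiveWalk.activeAt_of_loop (hD : Acyclic D) (hloop : IsActiveWalk D Z (v :: u :: p))
    (hlast : (u :: p).getLast? = some v) (hleave : ActiveAt D Z x v u)
    (hreturn : ActiveAt D Z w v z) : ActiveAt D Z x v z := by
  refine ⟨fun ⟨hxv, _⟩ => ?_, fun hv => ⟨(hleave.2 hv).1, (hreturn.2 hv).2⟩⟩
  by_cases huv : D u v
  · exact hleave.1 ⟨hxv, huv⟩
  have hvu : D v u := (List.isChain_cons_cons.1 hloop.1).1.resolve_right huv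
  obtain ⟨d, rfl | hd, hud⟩ := hloop.mem_anc_of_adj hvu hlast
  · exact absurd hud (hD _ _ hvu)
  · exact ⟨d, hd, .head hvu hud⟩

theorem IsActiveWalk.remove_loop (hD : Acyclic D)
    (hp : IsActiveWalk D Z (a ++ v :: (b ++ v :: c))) : IsActiveWalk D Z (a ++ v :: c) := by
  obtain ⟨ha, hbc, hleave⟩ := isActiveWalk_append_cons_iff.1 hp
  obtain ⟨hloop, hc, hreturn⟩ := isActiveWalk_append_cons_iff (a := v :: b).1 hbc
  refine isActiveWalk_append_cons_iff.2 ⟨ha, hc, fun x hx z hz => ?_⟩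
  obtain ⟨u, p, hup⟩ : ∃ u p, b ++ [v] = u :: p := List.exists_cons_of_ne_nil (by simp)
  rw [List.cons_append, hup] at hloop
  have hu : u ∈ (b ++ v :: c).head? := by
    have : b ++ v :: c = u :: (p ++ c) := by simp [← List.cons_append, ← hup]
    simp [this]
  exact hloop.activeAt_of_loop hD (by simp [← hup]) (hleave x hx u hu)
    (hreturn _ (List.getLast?_eq_some_getLast (List.cons_ne_nil v b)) z hz)

theorem exists_eq_append_cons_append_cons_of_not_nodup (hp : ¬ p.Nodup) :
    ∃ a b c v, p = a ++ v :: (b ++ v :: c) := by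
  induction p with
  | nil => simp at hp
  | cons x p ih =>
    by_cases hx : x ∈ p
    · obtain ⟨b, c, rfl⟩ := List.append_of_mem hx
      exact ⟨[], b, c, x, rfl⟩
    · obtain ⟨a, b, c, v, rfl⟩ := ih fun hnodup => hp (List.nodup_cons.2 ⟨hx, hnodup⟩)
      exact ⟨x :: a, b, c, v, rfl⟩

theorem IsActiveWalk.exists_nodup (hD : Acyclic D) (hp : IsActiveWalk D Z p) :
    ∃ q, IsActiveWalk D Z q ∧ q.head? = p.head? ∧ q.getLast? = p.getLast? ∧ q.Nodup := by
  induction hlength : p.length using Nat.strong_induction_on generalizing p with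
  | _ n ih =>
    by_cases hnodup : p.Nodup
    · exact ⟨p, hp, rfl, rfl, hnodup⟩
    obtain ⟨a, b, c, v, rfl⟩ := exists_eq_append_cons_append_cons_of_not_nodup hnodup
    have hshorter : (a ++ v :: c).length < n := by simp [← hlength]
    obtain ⟨q, hq, hhead, hlast, hnodup⟩ := ih _ hshorter (hp.remove_loop hD) rfl
    refine ⟨q, hq, hhead.trans (by cases a <;> rfl), hlast.trans ?_, hnodup⟩
    simp [List.getLast?_append, List.getLast?_cons]

theorem dSep_singleton_iff (hD : Acyclic D) :
    DSep D {s} {t} Z ↔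
      ∀ p, IsActiveWalk D Z p → p.head? = some s → p.getLast? ≠ some t := by
  constructor
  · intro hsep p hp hhead hlast
    obtain ⟨q, hq, hqhead, hqlast, hnodup⟩ := hp.exists_nodup hD
    exact not_blocked_iff.2 hq.2
      (hsep s rfl t rfl q ⟨hq.1, hqhead.trans hhead, hqlast.trans hlast, hnodup⟩)
  · rintro h s' rfl t' rfl p ⟨hchain, hhead, hlast, -⟩
    by_contra hblocked
    exact h p ⟨hchain, not_blocked_iff.1 hblocked⟩ hhead hlast

end ActiveWalks

section BayesBall

variable {V : Type*} {D : V → V → Prop} {W Z : Set V} {s t u v w c : V} {p : List V}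

/-- The kind of endpoint that an edge has at one of its two vertices. -/
inductive EdgeMark
  | tail
  | arrowhead

/-- Shachter's Bayes ball: `BayesBall D Z s m v` says that an active walk joins `v` to `s`, with
mark `m` at `v` on the edge leaving `v`. The trivial walk gets the mark `tail`, since it can be
prolonged in the same way as a walk leaving its endpoint along an outgoing edge. -/
inductive BayesBall (D : V → V → Prop) (Z : Set V) (s : V) : EdgeMark → V → Prop
  | refl : BayesBall D Z s .tail s
  | backward {v w : V} : BayesBall D Z s .tail v → v ∉ Z → D w v → BayesBall D Z s .tail w
  | bounce {v w : V} :
      BayesBall D Z s .arrowhead v → v ∈ anc D Z → D w v → BayesBall D Z s .tail w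
  | forward {m : EdgeMark} {v w : V} :
      BayesBall D Z s m v → v ∉ Z → D v w → BayesBall D Z s .arrowhead w

theorem BayesBall.exists_isActiveWalk (hD : Acyclic D) {m : EdgeMark}
    (h : BayesBall D Z s m v) :
    ∃ p, IsActiveWalk D Z (v :: p) ∧ (v :: p).getLast? = some s ∧
      ∀ u ∈ p.head?, match m with
        | .tail => D v u
        | .arrowhead => D u v := by
  have extend {v w p} (hp : IsActiveWalk D Z (v :: p)) (hwv : SymmGen D w v)
      (hactive : ∀ u ∈ p.head?, ActiveAt D Z w v u) : IsActiveWalk D Z (w :: v :: p) := by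
    cases p with
    | nil => exact isActiveWalk_pair_iff.2 hwv
    | cons u p => exact isActiveWalk_cons_cons_cons_iff.2 ⟨hwv, hactive u rfl, hp⟩
  induction h with
  | refl => exact ⟨[], isActiveWalk_singleton, rfl, by simp⟩
  | @backward v w _ hv hwv ih =>
    obtain ⟨p, hp, hlast, hmark⟩ := ih
    refine ⟨v :: p, extend hp (.inl hwv) fun u hu => ?_, by simpa using hlast, by simpa using hwv⟩
    exact ⟨fun h => absurd h.2 (hD.not_adj_symm (hmark u hu)), fun h => absurd h hv⟩
  | @bounce v w _ hv hwv ih =>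
    obtain ⟨p, hp, hlast, hmark⟩ := ih
    refine ⟨v :: p, extend hp (.inl hwv) fun u hu => ?_, by simpa using hlast, by simpa using hwv⟩
    exact ⟨fun _ => hv, fun _ => ⟨hwv, hmark u hu⟩⟩
  | @forward m v w _ hv hvw ih =>
    obtain ⟨p, hp, hlast, -⟩ := ih
    refine ⟨v :: p, extend hp (.inr hvw) fun u _ => ?_, by simpa using hlast, by simpa using hvw⟩
    exact ⟨fun h => absurd h.1 (hD.not_adj_symm hvw), fun h => absurd h hv⟩

theorem IsActiveWalk.bayesBall (hD : Acyclic D) (hs : s ∉ Z) (hp : IsActiveWalk D Z (v :: p))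
    (hlast : (v :: p).getLast? = some s) :
    (∀ u ∈ p.head?, D u v → BayesBall D Z s .arrowhead v) ∧
      ((∀ u ∈ p.head?, ¬ D u v) → BayesBall D Z s .tail v) := by
  induction p generalizing v with
  | nil =>
    obtain rfl : v = s := by simpa using hlast
    exact ⟨by simp, fun _ => .refl⟩
  | cons u p ih =>
    have hvu : D v u ∨ D u v := (List.isChain_cons_cons.1 hp.1).1
    simp only [List.head?_cons, Option.mem_some_iff, forall_eq']
    rcases p with _ | ⟨u', p⟩
    · obtain rfl : u = s := by simpa using hlast
      exact ⟨fun huv => .forward .refl hs huv,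
        fun huv => .backward .refl hs (hvu.resolve_right huv)⟩
    obtain ⟨-, hactive, hp⟩ := isActiveWalk_cons_cons_cons_iff.1 hp
    obtain ⟨harrowhead, htail⟩ := ih hp (by simpa using hlast)
    simp only [List.head?_cons, Option.mem_some_iff, forall_eq'] at harrowhead htail
    by_cases hu' : D u' u
    · refine ⟨fun huv => (harrowhead hu').forward ?_ huv, fun huv => ?_⟩
      · exact fun hu => hD.not_adj_symm huv (hactive.2 hu).1
      · have hvu := hvu.resolve_right huv
        exact (harrowhead hu').bounce (hactive.1 ⟨hvu, hu'⟩) hvu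
    · have hu : u ∉ Z := fun hu => hu' (hactive.2 hu).2
      exact ⟨fun huv => (htail hu').forward hu huv,
        fun huv => (htail hu').backward hu (hvu.resolve_right huv)⟩

theorem IsActiveWalk.exists_bayesBall (hD : Acyclic D) (hs : s ∉ Z)
    (hp : IsActiveWalk D Z (v :: p)) (hlast : (v :: p).getLast? = some s) :
    ∃ m, BayesBall D Z s m v := by
  obtain ⟨harrowhead, htail⟩ := hp.bayesBall hD hs hlast
  by_cases h : ∃ u ∈ p.head?, D u v
  · obtain ⟨u, hu, huv⟩ := h
    exact ⟨_, harrowhead u hu huv⟩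
  · exact ⟨_, htail fun u hu huv => h ⟨u, hu, huv⟩⟩

theorem dSep_singleton_iff_forall_not_bayesBall (hD : Acyclic D) (ht : t ∉ Z) :
    DSep D {s} {t} Z ↔ ∀ m, ¬ BayesBall D Z t m s := by
  rw [dSep_singleton_iff hD]
  constructor
  · intro h m hball
    obtain ⟨p, hp, hlast, -⟩ := hball.exists_isActiveWalk hD
    exact h (s :: p) hp rfl hlast
  · intro h p hp hhead hlast
    obtain ⟨p, rfl⟩ := List.head?_eq_some_iff.1 hhead
    obtain ⟨m, hball⟩ := hp.exists_bayesBall hD ht hlast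
    exact h m hball

theorem moral_adj_iff :
    (moral D W).Adj u v ↔
      u ≠ v ∧ u ∈ W ∧ v ∈ W ∧ (D u v ∨ D v u ∨ ∃ w ∈ W, D u w ∧ D v w) := by
  simp only [moral, SimpleGraph.fromRel_adj]
  grind

theorem mem_cc_moral_of_adj (hv : v ∈ cc (moral D W) Z s) (hvW : v ∈ W) (hw : w ∉ Z) (hwW : w ∈ W)
    (h : D v w ∨ D w v ∨ ∃ c ∈ W, D v c ∧ D w c) : w ∈ cc (moral D W) Z s := by
  rcases eq_or_ne v w with rfl | hne
  · exact hv
  · exact mem_cc_of_adj hv (moral_adj_iff.2 ⟨hne, hvW, hwW, h⟩) hw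

theorem BayesBall.mem_cc_moral_of_mark (hW : anc D W ⊆ W) (hZ : Z ⊆ W) (hs : s ∉ Z) (hsW : s ∈ W)
    {m : EdgeMark} (h : BayesBall D Z s m v) :
    match m with
      | .tail => v ∈ W ∧ (v ∉ Z → v ∈ cc (moral D W) Z s)
      | .arrowhead => v ∈ W → ∃ u ∈ cc (moral D W) Z s, D u v := by
  have closed {u v} (huv : D u v) (hv : v ∈ W) : u ∈ W := hW ⟨v, hv, .single huv⟩
  induction h with
  | refl => exact ⟨hsW, fun _ => mem_cc_self hs⟩
  | backward _ hv hwv ih =>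
    have hwW := closed hwv ih.1
    exact ⟨hwW, fun hw => mem_cc_moral_of_adj (ih.2 hv) ih.1 hw hwW (.inr (.inl hwv))⟩
  | @bounce v w _ hv hwv ih =>
    have hvW : v ∈ W := hW (anc_mono hZ hv)
    have hwW := closed hwv hvW
    obtain ⟨u, hu, huv⟩ := ih hvW
    exact ⟨hwW, fun hw => mem_cc_moral_of_adj hu (closed huv hvW) hw hwW
      (.inr (.inr ⟨v, hvW, huv, hwv⟩))⟩
  | @forward m v w _ hv hvw ih =>
    intro hwW
    have hvW := closed hvw hwW
    cases m with
    | tail => exact ⟨v, ih.2 hv, hvw⟩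
    | arrowhead =>
      obtain ⟨u, hu, huv⟩ := ih hvW
      exact ⟨v, mem_cc_moral_of_adj hu (closed huv hvW) hv hvW (.inl huv), hvw⟩

theorem BayesBall.mem_cc_moral (hW : anc D W ⊆ W) (hZ : Z ⊆ W) (hs : s ∉ Z) (hsW : s ∈ W)
    {m : EdgeMark} (h : BayesBall D Z s m v) (hv : v ∉ Z) (hvW : v ∈ W) :
    v ∈ cc (moral D W) Z s := by
  have hmark := h.mem_cc_moral_of_mark hW hZ hs hsW
  cases m with
  | tail => exact hmark.2 hv
  | arrowhead =>
    obtain ⟨u, hu, huv⟩ := hmark hvW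
    exact mem_cc_moral_of_adj hu (hW ⟨v, hvW, .single huv⟩) hv hvW (.inl huv)

theorem BayesBall.of_reflTransGen {m : EdgeMark} (h : BayesBall D Z s m v) (hv : v ∉ anc D Z)
    (hvw : ReflTransGen D v w) : ∃ m, BayesBall D Z s m w := by
  induction hvw using ReflTransGen.head_induction_on generalizing m with
  | refl => exact ⟨m, h⟩
  | head hvu _ ih =>
    exact ih (h.forward (fun hvZ => hv (subset_anc hvZ)) hvu) fun hu =>
      hv (mem_anc_of_reflTransGen (.single hvu) hu)

theorem bayesBall_tail_of_reflTransGen (hvs : ReflTransGen D v s) (hv : v ∉ anc D Z) :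
    BayesBall D Z s .tail v := by
  induction hvs using ReflTransGen.head_induction_on with
  | refl => exact .refl
  | head hvu _ ih =>
    have hu := fun hu => hv (mem_anc_of_reflTransGen (.single hvu) hu)
    exact (ih hu).backward (fun huZ => hu (subset_anc huZ)) hvu

-- A ball stopped at a collider outside `anc D Z` reaches `t` if the collider is an ancestor of `t`;
-- if it is an ancestor of `s`, the collider is also reached by going up from `s`.
theorem BayesBall.bounce_or_exists (h : BayesBall D Z s .arrowhead c)
    (hc : c ∈ anc D ({s, t} ∪ Z)) (hwc : D w c) :
    (∃ m, BayesBall D Z s m t) ∨ BayesBall D Z s .tail w := by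
  by_cases hcZ : c ∈ anc D Z
  · exact .inr (h.bounce hcZ hwc)
  obtain ⟨d, (rfl | rfl) | hd, hcd⟩ := hc
  · exact .inr ((bayesBall_tail_of_reflTransGen hcd hcZ).backward
      (fun hc => hcZ (subset_anc hc)) hwc)
  · exact .inl (h.of_reflTransGen hcZ hcd)
  · exact absurd ⟨d, hd, hcd⟩ hcZ

theorem exists_bayesBall_of_mem_cc_moral
    (h : t ∈ cc (moral D (anc D ({s, t} ∪ Z))) Z s) : ∃ m, BayesBall D Z s m t := by
  by_contra hnot
  refine hnot (cc_subset_of_closed (S := {v | ∃ m, BayesBall D Z s m v}) ⟨_, .refl⟩ ?_ h)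
  rintro v ⟨m, hball⟩ w hvw hv -
  have up {c} (hball : BayesBall D Z s .arrowhead c) (hc : c ∈ anc D ({s, t} ∪ Z))
      (hwc : D w c) : ∃ m, BayesBall D Z s m w :=
    ⟨_, (hball.bounce_or_exists hc hwc).resolve_left hnot⟩
  obtain ⟨-, hvW, -, hvw | hwv | ⟨c, hc, hvc, hwc⟩⟩ := moral_adj_iff.1 hvw
  · exact ⟨_, hball.forward hv hvw⟩
  · cases m with
    | tail => exact ⟨_, hball.backward hv hwv⟩
    | arrowhead => exact up hball hvW hwv
  · exact up (hball.forward hv hvc) hc hwc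

theorem dSep_iff_forall_notMem_cc_moral (hD : Acyclic D) {S T : Set V} (hS : Disjoint S Z)
    (hT : Disjoint T Z) :
    DSep D S T Z ↔ ∀ s ∈ S, ∀ t ∈ T, t ∉ cc (moral D (anc D ({s, t} ∪ Z))) Z s := by
  have hsep : DSep D S T Z ↔ ∀ s ∈ S, ∀ t ∈ T, DSep D {s} {t} Z := by simp [DSep]
  rw [hsep]
  refine forall₄_congr fun s hs t ht => ?_
  have hsZ := hS.notMem_of_mem_left hs
  have htZ := hT.notMem_of_mem_left ht
  rw [dSep_singleton_iff_forall_not_bayesBall hD htZ, ← not_exists, not_iff_not]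
  constructor
  · rintro ⟨m, hball⟩
    exact mem_cc_symm <| hball.mem_cc_moral (anc_subset_anc subset_rfl)
      (subset_union_right.trans subset_anc) htZ (subset_anc (by simp)) hsZ (subset_anc (by simp))
  · intro h
    rw [pair_comm] at h
    exact exists_bayesBall_of_mem_cc_moral (mem_cc_symm h)

end BayesBall

section ProperBackDoorGraph

variable {V : Type*} {D : V → V → Prop} {A Y : V} {S W W' Z : Set V} {u v : V}

theorem DSep.disjoint {T : Set V} (h : DSep D S T Z) : Disjoint S T := by
  rw [Set.disjoint_left]
  intro s hS hT
  refine not_blocked_iff.2 (isActiveWalk_singleton (x := s)).2 (h s hS s hT [s] ?_)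
  exact ⟨.singleton s, rfl, rfl, List.nodup_singleton s⟩

theorem moral_mono (hW : W ⊆ W') : moral D W ≤ moral D W' := by
  intro u v huv
  obtain ⟨hne, hu, hv, h⟩ := moral_adj_iff.1 huv
  exact moral_adj_iff.2 ⟨hne, hW hu, hW hv,
    h.imp_right (.imp_right fun ⟨w, hw, hcommon⟩ => ⟨w, hW hw, hcommon⟩)⟩

theorem Acyclic.pbd (hD : Acyclic D) : Acyclic (pbd D A Y) := fun u v huv hvu =>
  hD u v huv.1 (ReflTransGen.mono (fun _ _ h => h.1) _ _ hvu)

theorem pbd_of_ne (hu : u ≠ A) (huv : D u v) : pbd D A Y u v := ⟨huv, fun h => hu h.1⟩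

theorem anc_pbd (hA : A ∈ S) : anc (pbd D A Y) S = anc D S := by
  refine Subset.antisymm (fun u ⟨v, hv, huv⟩ => ?_) ?_
  · exact ⟨v, hv, ReflTransGen.mono (fun _ _ h => h.1) _ _ huv⟩
  rintro u ⟨v, hv, huv⟩
  induction huv using ReflTransGen.head_induction_on with
  | refl => exact subset_anc hv
  | @head u w huw _ ih =>
    rcases eq_or_ne u A with rfl | hu
    · exact subset_anc hA
    · exact mem_anc_of_reflTransGen (.single (pbd_of_ne hu huw)) ih

theorem dSep_pbd_iff (hD : Acyclic D) (hA : A ∉ Z) (hY : Y ∉ Z) :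
    DSep (pbd D A Y) {A} {Y} Z ↔
      A ∉ cc (moral (pbd D A Y) (anc D ({A, Y} ∪ Z))) Z Y := by
  rw [dSep_iff_forall_notMem_cc_moral hD.pbd (disjoint_singleton_left.2 hA)
    (disjoint_singleton_left.2 hY)]
  simp only [mem_singleton_iff, forall_eq]
  rw [anc_pbd (by simp), not_iff_not]
  exact ⟨mem_cc_symm, mem_cc_symm⟩

theorem moral_adj_pbd_of_ne (hu : u ≠ A) (hv : v ≠ A) (huv : (moral D W).Adj u v) :
    (moral (pbd D A Y) W).Adj u v := by
  obtain ⟨hne, huW, hvW, h⟩ := moral_adj_iff.1 huv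
  exact moral_adj_iff.2 ⟨hne, huW, hvW, h.imp (pbd_of_ne hu) (.imp (pbd_of_ne hv)
    fun ⟨w, hw, huw, hvw⟩ => ⟨w, hw, pbd_of_ne hu huw, pbd_of_ne hv hvw⟩)⟩

theorem moral_le_moral_pbd (hW : Disjoint W (cn D A Y)) :
    moral D W ≤ moral (pbd D A Y) W := by
  have keep {u v} (hv : v ∈ W) (huv : D u v) : pbd D A Y u v :=
    ⟨huv, fun h => hW.notMem_of_mem_left hv h.2⟩
  intro u v huv
  obtain ⟨hne, hu, hv, h⟩ := moral_adj_iff.1 huv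
  exact moral_adj_iff.2 ⟨hne, hu, hv, h.imp (keep hv) (.imp (keep hu)
    fun ⟨w, hw, huw, hvw⟩ => ⟨w, hw, keep hw huw, keep hw hvw⟩)⟩

end ProperBackDoorGraph

section CausalVertices

variable {V : Type*} {D : V → V → Prop} {A Y : V} {S : Set V} {v : V}

theorem outcome_mem_cn (hAY : A ≠ Y) (hAancY : ReflTransGen D A Y) : Y ∈ cn D A Y :=
  ⟨hAY.symm, hAancY, .refl⟩

theorem treatment_mem_forb : A ∈ forb D A Y := .inr rfl

theorem desc_cn_subset_forb : desc D (cn D A Y) ⊆ forb D A Y := subset_union_left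

theorem cn_subset_desc_cn : cn D A Y ⊆ desc D (cn D A Y) := fun v hv => ⟨v, hv, .refl⟩

theorem cn_subset_forb : cn D A Y ⊆ forb D A Y := cn_subset_desc_cn.trans desc_cn_subset_forb

theorem treatment_notMem_desc_cn (hD : Acyclic D) : A ∉ desc D (cn D A Y) := fun ⟨_, hv, hvA⟩ =>
  hv.1 (hD.eq_of_reflTransGen hvA hv.2.1)

theorem mem_cn_of_mem_desc_cn (hD : Acyclic D) (hv : v ∈ desc D (cn D A Y))
    (hvY : ReflTransGen D v Y) : v ∈ cn D A Y := by
  refine ⟨fun h => treatment_notMem_desc_cn hD (h ▸ hv), ?_, hvY⟩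
  obtain ⟨c, hc, hcv⟩ := hv
  exact hc.2.1.trans hcv

theorem mem_desc_cn_of_mem_forb (hv : v ∈ forb D A Y) (hvA : v ≠ A) : v ∈ desc D (cn D A Y) :=
  hv.resolve_right hvA

theorem disjoint_anc_cn (hS : Disjoint S (desc D (cn D A Y))) :
    Disjoint (anc D S) (cn D A Y) := by
  rw [Set.disjoint_left]
  rintro v ⟨w, hw, hvw⟩ hv
  exact hS.notMem_of_mem_left hw ⟨v, hv, hvw⟩

theorem anc_inter_desc_cn_subset_cn (hD : Acyclic D) (hS : S ∩ desc D (cn D A Y) ⊆ {Y}) :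
    anc D S ∩ desc D (cn D A Y) ⊆ cn D A Y := by
  rintro v ⟨⟨w, hw, hvw⟩, hv⟩
  have hwY : w = Y := hS ⟨hw, let ⟨c, hc, hcv⟩ := hv; ⟨c, hc, hcv.trans hvw⟩⟩
  exact mem_cn_of_mem_desc_cn hD hv (hwY ▸ hvw)

end CausalVertices

section OptimalSet

variable {V : Type*} {D : V → V → Prop} {A Y : V} {L N : Set V} {u v : V}

/-- The candidate optimal adjustment set `O`: the neighbours of `Y` in `H¹`. -/
def optimalSet (D : V → V → Prop) (A Y : V) (L N : Set V) : Set V :=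
  (H1 D A Y L N).neighborSet Y

theorem pair_union_subset_ancAYL : {A, Y} ∪ L ⊆ ancAYL D A Y L := subset_anc

theorem mem_h1verts_iff : v ∈ H1verts D A Y L N ↔
    v ∈ ancAYL D A Y L ∧ (v = A ∨ v = Y ∨ v ∈ N ∧ v ∉ forb D A Y) := by
  simp only [H1verts, Ignore, mem_sdiff, mem_inter_iff, mem_union, mem_univ, mem_insert_iff,
    mem_singleton_iff, true_and]
  tauto

theorem mem_optimalSet_iff (hAY : A ≠ Y) (hYL : Y ∉ L) :
    v ∈ optimalSet D A Y L N ↔ v ≠ Y ∧ v ∈ H1verts D A Y L N ∧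
      (v ∈ L ∨ v ∈ cc (H0 D A Y L) (Ignore D A Y L N ∪ {Y, v})ᶜ Y) := by
  have hY : Y ∈ H1verts D A Y L N :=
    mem_h1verts_iff.2 ⟨pair_union_subset_ancAYL (by simp), .inr (.inl rfl)⟩
  have hpath (u v : V) :
      (∃ p, IsPath (H0 D A Y L).Adj u v p ∧ ∀ x ∈ p, x ≠ u → x ≠ v → x ∈ Ignore D A Y L N) ↔
        v ∈ cc (H0 D A Y L) (Ignore D A Y L N ∪ {u, v})ᶜ u := by
    simp only [cc, Set.mem_ofPred_eq, mem_compl_iff, mem_union, mem_insert_iff, mem_singleton_iff]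
    refine exists_congr fun p => and_congr_right fun _ => forall₂_congr fun x _ => ?_
    tauto
  have hsymm : v ∈ cc (H0 D A Y L) (Ignore D A Y L N ∪ {Y, v})ᶜ Y ↔
      Y ∈ cc (H0 D A Y L) (Ignore D A Y L N ∪ {v, Y})ᶜ v := by
    rw [pair_comm]
    exact ⟨mem_cc_symm, mem_cc_symm⟩
  simp only [optimalSet, SimpleGraph.mem_neighborSet, H1, SimpleGraph.fromRel_adj, hpath, ← hsymm]
  grind

theorem outcome_notMem_optimalSet : Y ∉ optimalSet D A Y L N := (H1 D A Y L N).irrefl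

/-- The component of `Y` in the subgraph of `H⁰` induced on `Y` and the vertices deleted in the
construction of `H¹`. Together with `L`, its neighbours in `H⁰` outside this subgraph form the set
`O`. -/
def outcomeComponent (D : V → V → Prop) (A Y : V) (L N : Set V) : Set V :=
  cc (H0 D A Y L) (insert Y (Ignore D A Y L N))ᶜ Y

theorem outcome_mem_outcomeComponent : Y ∈ outcomeComponent D A Y L N := mem_cc_self (by simp)

theorem outcomeComponent_subset : outcomeComponent D A Y L N ⊆ insert Y (Ignore D A Y L N) :=
  fun _ hv => not_not.1 (notMem_of_mem_cc hv)

theorem mem_outcomeComponent_of_adj (hu : u ∈ outcomeComponent D A Y L N)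
    (huv : (H0 D A Y L).Adj u v) (hv : v ∈ insert Y (Ignore D A Y L N)) :
    v ∈ outcomeComponent D A Y L N :=
  mem_cc_of_adj hu huv (not_not.2 hv)

theorem mem_optimalSet_of_adj (hAY : A ≠ Y) (hYL : Y ∉ L)
    (hu : u ∈ outcomeComponent D A Y L N) (huv : (H0 D A Y L).Adj u v)
    (hv : v ∉ insert Y (Ignore D A Y L N)) : v ∈ optimalSet D A Y L N := by
  obtain ⟨hvY, hvI⟩ := not_or.1 hv
  refine (mem_optimalSet_iff hAY hYL).2 ⟨hvY, ⟨(moral_adj_iff.1 huv).2.2.1, hvI⟩, .inr ?_⟩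
  refine mem_cc_of_adj (cc_mono le_rfl (compl_subset_compl.2 ?_) hu) huv (by simp)
  grind

theorem cc_optimalSet_subset (hAY : A ≠ Y) (hYL : Y ∉ L) :
    cc (H0 D A Y L) (optimalSet D A Y L N) Y ⊆ outcomeComponent D A Y L N :=
  cc_subset_of_closed outcome_mem_outcomeComponent fun _ hu _ huv _ hv =>
    mem_outcomeComponent_of_adj hu huv <|
      not_imp_comm.1 (mem_optimalSet_of_adj hAY hYL hu huv) hv

theorem cn_subset_ancAYL : cn D A Y ⊆ ancAYL D A Y L := fun _ hv => ⟨Y, by simp, hv.2.2⟩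

theorem cn_subset_insert_ignore : cn D A Y ⊆ insert Y (Ignore D A Y L N) := by
  intro v hv
  rcases eq_or_ne v Y with rfl | hvY
  · exact mem_insert _ _
  · exact .inr ⟨⟨cn_subset_ancAYL hv, by simp [hv.1, hvY]⟩, .inr (cn_subset_forb hv)⟩

theorem h0_adj_of_mem_cn (hv : v ∈ cn D A Y) (hu : u ≠ A) (huv : D u v) (hne : u ≠ v) :
    (H0 D A Y L).Adj v u := by
  have hvW : v ∈ ancAYL D A Y L := cn_subset_ancAYL hv
  exact moral_adj_iff.2 ⟨hne.symm, hvW, mem_anc_of_reflTransGen (.single huv) hvW,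
    .inr (.inl (pbd_of_ne hu huv))⟩

theorem cn_subset_outcomeComponent (hD : Acyclic D) :
    cn D A Y ⊆ outcomeComponent D A Y L N := by
  rintro v ⟨hvA, hAv, hvY⟩
  induction hvY using ReflTransGen.head_induction_on with
  | refl => exact outcome_mem_outcomeComponent
  | @head v w hvw hwY ih =>
    have hwA : w ≠ A := by rintro rfl; exact hD v w hvw hAv
    have hw : w ∈ cn D A Y := ⟨hwA, hAv.tail hvw, hwY⟩
    have hne : v ≠ w := by rintro rfl; exact hD v v hvw .refl
    exact mem_outcomeComponent_of_adj (ih hwA hw.2.1) (h0_adj_of_mem_cn hw hvA hvw hne)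
      (cn_subset_insert_ignore ⟨hvA, hAv, .head hvw hwY⟩)

theorem mem_cn_or_mem_optimalSet_of_mem_parents (hD : Acyclic D) (hAY : A ≠ Y) (hYL : Y ∉ L)
    (hN : parents D (cn D A Y) \ forb D A Y ⊆ N) (hu : u ∈ parents D (cn D A Y)) (huA : u ≠ A) :
    u ∈ cn D A Y ∨ u ∈ optimalSet D A Y L N := by
  have ⟨v, hv, huv⟩ := hu
  by_cases huF : u ∈ forb D A Y
  · exact .inl (mem_cn_of_mem_desc_cn hD (mem_desc_cn_of_mem_forb huF huA) (.head huv hv.2.2))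
  refine .inr (mem_optimalSet_of_adj hAY hYL (cn_subset_outcomeComponent hD hv)
    (h0_adj_of_mem_cn hv huA huv ?_) ?_)
  · rintro rfl
    exact huF (cn_subset_forb hv)
  · rintro (rfl | hI)
    · exact huF (cn_subset_forb (outcome_mem_cn hAY (hv.2.1.trans hv.2.2)))
    · exact hI.2.elim (fun h => h.2 (hN ⟨hu, huF⟩)) huF

end OptimalSet

section Adjustment

variable {V : Type*} {D : V → V → Prop} {A Y : V} {L N O W Z : Set V} {v z : V}

theorem GAC.ne (hZ : GAC D A Y L N Z) : A ≠ Y := by simpa using hZ.1.disjoint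

theorem GAC.superset (hZ : GAC D A Y L N Z) : L ⊆ Z := hZ.2.2.1

theorem GAC.subset (hZ : GAC D A Y L N Z) : Z ⊆ N := hZ.2.2.2

theorem GAC.disjoint_forb (hZ : GAC D A Y L N Z) : Disjoint Z (forb D A Y) :=
  disjoint_iff_inter_eq_empty.2 hZ.2.1

theorem GAC.treatment_notMem (hZ : GAC D A Y L N Z) : A ∉ Z :=
  hZ.disjoint_forb.notMem_of_mem_right treatment_mem_forb

theorem GAC.outcome_notMem (hZ : GAC D A Y L N Z) (hAancY : ReflTransGen D A Y) : Y ∉ Z :=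
  hZ.disjoint_forb.notMem_of_mem_right (cn_subset_forb (outcome_mem_cn hZ.ne hAancY))

theorem GAC.disjoint_ignore (hZ : GAC D A Y L N Z) : Disjoint Z (Ignore D A Y L N) := by
  rw [Set.disjoint_left]
  rintro v hv ⟨-, hvN | hvF⟩
  · exact hvN.2 (hZ.subset hv)
  · exact hZ.disjoint_forb.notMem_of_mem_left hv hvF

theorem h0_le_moral_pbd (hL : L ⊆ Z) :
    H0 D A Y L ≤ moral (pbd D A Y) (anc D ({A, Y} ∪ Z)) :=
  moral_mono (anc_mono (union_subset_union_right _ hL))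

theorem GAC.notMem_cc_moral (hD : Acyclic D) (hAancY : ReflTransGen D A Y)
    (hZ : GAC D A Y L N Z) : A ∉ cc (moral (pbd D A Y) (anc D ({A, Y} ∪ Z))) Z Y :=
  (dSep_pbd_iff hD hZ.treatment_notMem (hZ.outcome_notMem hAancY)).1 hZ.1

theorem GAC.mem_cc_h0 (hAancY : ReflTransGen D A Y) (hZ : GAC D A Y L N Z)
    (hv : v ∈ optimalSet D A Y L N \ Z) : v ∈ cc (H0 D A Y L) Z Y := by
  have hYL : Y ∉ L := notMem_subset hZ.superset (hZ.outcome_notMem hAancY)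
  obtain ⟨-, -, hvL | hvcc⟩ := (mem_optimalSet_iff hZ.ne hYL).1 hv.1
  · exact absurd (hZ.superset hvL) hv.2
  · refine cc_mono le_rfl (fun x hx => ?_) hvcc
    rintro (hxI | rfl | rfl)
    · exact hZ.disjoint_ignore.notMem_of_mem_left hx hxI
    · exact hZ.outcome_notMem hAancY hx
    · exact hv.2 hx

theorem GAC.treatment_notMem_optimalSet (hD : Acyclic D) (hAancY : ReflTransGen D A Y)
    (hZ : GAC D A Y L N Z) : A ∉ optimalSet D A Y L N := fun hA =>
  hZ.notMem_cc_moral hD hAancY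
    (cc_mono (h0_le_moral_pbd hZ.superset) subset_rfl
      (hZ.mem_cc_h0 hAancY ⟨hA, hZ.treatment_notMem⟩))

theorem GAC.optimalSet_subset (hD : Acyclic D) (hAancY : ReflTransGen D A Y)
    (hZ : GAC D A Y L N Z) :
    optimalSet D A Y L N ⊆ ancAYL D A Y L ∩ (N \ forb D A Y) := by
  intro v hv
  have hYL : Y ∉ L := notMem_subset hZ.superset (hZ.outcome_notMem hAancY)
  obtain ⟨hvY, hvV, -⟩ := (mem_optimalSet_iff hZ.ne hYL).1 hv
  have hvA : v ≠ A := by rintro rfl; exact hZ.treatment_notMem_optimalSet hD hAancY hv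
  obtain ⟨hvW, h⟩ := mem_h1verts_iff.1 hvV
  exact ⟨hvW, (h.resolve_left hvA).resolve_left hvY⟩

theorem GAC.subset_optimalSet (hAancY : ReflTransGen D A Y) (hZ : GAC D A Y L N Z) :
    L ⊆ optimalSet D A Y L N := by
  have hYL : Y ∉ L := notMem_subset hZ.superset (hZ.outcome_notMem hAancY)
  intro v hv
  refine (mem_optimalSet_iff hZ.ne hYL).2 ⟨?_, ?_, .inl hv⟩
  · rintro rfl
    exact hYL hv
  · have hvZ := hZ.superset hv
    exact mem_h1verts_iff.2 ⟨pair_union_subset_ancAYL (.inr hv),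
      .inr (.inr ⟨hZ.subset hvZ, hZ.disjoint_forb.notMem_of_mem_left hvZ⟩)⟩

theorem GAC.gac_optimalSet (hD : Acyclic D) (hAancY : ReflTransGen D A Y) (hZ : GAC D A Y L N Z) :
    GAC D A Y L N (optimalSet D A Y L N) := by
  have hO := hZ.optimalSet_subset hD hAancY
  have hA := hZ.treatment_notMem_optimalSet hD hAancY
  refine ⟨(dSep_pbd_iff hD hA outcome_notMem_optimalSet).2 fun hAcc => ?_,
    disjoint_iff_inter_eq_empty.1 (Set.disjoint_left.2 fun v hv => (hO hv).2.2),
    hZ.subset_optimalSet hAancY, fun v hv => (hO hv).2.1⟩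
  have hanc : anc D ({A, Y} ∪ optimalSet D A Y L N) ⊆ ancAYL D A Y L :=
    anc_subset_anc (union_subset (subset_union_left.trans subset_anc) fun v hv => (hO hv).1)
  have hYL : Y ∉ L := notMem_subset hZ.superset (hZ.outcome_notMem hAancY)
  have hAI := outcomeComponent_subset <|
    cc_optimalSet_subset hZ.ne hYL (cc_mono (moral_mono hanc) subset_rfl hAcc)
  exact hAI.elim hZ.ne fun h => h.1.2 (by simp)

theorem GAC.disjoint_anc_pair_union_cn (hD : Acyclic D) (hAancY : ReflTransGen D A Y)
    (hZ : GAC D A Y L N Z) (hv : v ∈ optimalSet D A Y L N) :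
    Disjoint (anc D ({A, v} ∪ Z)) (cn D A Y) := by
  refine disjoint_anc_cn (Set.disjoint_left.2 ?_)
  rintro w ((rfl | rfl) | hw) hwF
  · exact treatment_notMem_desc_cn hD hwF
  · exact (hZ.optimalSet_subset hD hAancY hv).2.2 (desc_cn_subset_forb hwF)
  · exact hZ.disjoint_forb.notMem_of_mem_left hw (desc_cn_subset_forb hwF)

theorem GAC.anc_pair_union_subset (hD : Acyclic D) (hAancY : ReflTransGen D A Y)
    (hZ : GAC D A Y L N Z) (hv : v ∈ optimalSet D A Y L N) :
    anc D ({A, v} ∪ Z) ⊆ anc D ({A, Y} ∪ Z) := by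
  refine anc_subset_anc ?_
  rintro w ((rfl | rfl) | hw)
  · exact subset_anc (by simp)
  · exact anc_mono (union_subset_union_right _ hZ.superset)
      (hZ.optimalSet_subset hD hAancY hv).1
  · exact subset_anc (.inr hw)

theorem GAC.dSep_optimalSet_sdiff (hD : Acyclic D) (hAancY : ReflTransGen D A Y)
    (hZ : GAC D A Y L N Z) : DSep D {A} (optimalSet D A Y L N \ Z) Z := by
  rw [dSep_iff_forall_notMem_cc_moral hD (disjoint_singleton_left.2 hZ.treatment_notMem)
    disjoint_sdiff_left]
  simp only [mem_singleton_iff, forall_eq]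
  intro v hv hAv
  have hmoral : moral D (anc D ({A, v} ∪ Z)) ≤ moral (pbd D A Y) (anc D ({A, Y} ∪ Z)) :=
    (moral_le_moral_pbd (hZ.disjoint_anc_pair_union_cn hD hAancY hv.1)).trans
      (moral_mono (hZ.anc_pair_union_subset hD hAancY hv.1))
  have hYv := cc_mono (h0_le_moral_pbd hZ.superset) subset_rfl (hZ.mem_cc_h0 hAancY hv)
  have hvA := mem_cc_symm (cc_mono hmoral subset_rfl hAv)
  exact hZ.notMem_cc_moral hD hAancY (mem_cc_trans hYv hvA)

theorem cc_moral_subset_cc_h0 (hW : W ⊆ ancAYL D A Y L) :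
    cc (moral D W) ({A} ∪ O) Y ⊆ cc (H0 D A Y L) O Y := by
  refine cc_subset_cc subset_union_right fun u v hu hv huv => moral_mono hW ?_
  exact moral_adj_pbd_of_ne (fun h => hu (.inl h)) (fun h => hv (.inl h)) huv

theorem cc_moral_subset_cn (hD : Acyclic D) (hAY : A ≠ Y) (hAancY : ReflTransGen D A Y)
    (hYL : Y ∉ L) (hN : parents D (cn D A Y) \ forb D A Y ⊆ N)
    (hW : W ∩ desc D (cn D A Y) ⊆ cn D A Y) :
    cc (moral D W) ({A} ∪ optimalSet D A Y L N) Y ⊆ cn D A Y := by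
  have parent_mem {u v} (hv : v ∈ cn D A Y) (huv : D u v)
      (hu : u ∉ {A} ∪ optimalSet D A Y L N) : u ∈ cn D A Y :=
    (mem_cn_or_mem_optimalSet_of_mem_parents hD hAY hYL hN ⟨v, hv, huv⟩
      fun h => hu (.inl h)).resolve_right fun h => hu (.inr h)
  have child_mem {v w} (hv : v ∈ cn D A Y) (hvw : D v w) (hw : w ∈ W) : w ∈ cn D A Y :=
    hW ⟨hw, v, hv, .single hvw⟩
  refine cc_subset_of_closed (outcome_mem_cn hAY hAancY) fun v hv w hvw _ hw => ?_
  obtain ⟨-, -, hwW, hvw | hwv | ⟨c, hc, hvc, hwc⟩⟩ := moral_adj_iff.1 hvw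
  · exact child_mem hv hvw hwW
  · exact parent_mem hv hwv hw
  · exact parent_mem (child_mem hv hvc hc) hwc hw

theorem GAC.notMem_cc_of_subset_ancAYL (hD : Acyclic D) (hAancY : ReflTransGen D A Y)
    (hZ : GAC D A Y L N Z) (hN : N ⊆ ancAYL D A Y L) (hz : z ∈ Z) :
    z ∉ cc (moral D (anc D ({Y, z} ∪ ({A} ∪ optimalSet D A Y L N))))
      ({A} ∪ optimalSet D A Y L N) Y := by
  have hYL : Y ∉ L := notMem_subset hZ.superset (hZ.outcome_notMem hAancY)
  have hanc : anc D ({Y, z} ∪ ({A} ∪ optimalSet D A Y L N)) ⊆ ancAYL D A Y L := by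
    refine anc_subset_anc ?_
    rintro w ((rfl | rfl) | rfl | hw)
    · exact subset_anc (by simp)
    · exact hN (hZ.subset hz)
    · exact subset_anc (by simp)
    · exact (hZ.optimalSet_subset hD hAancY hw).1
  intro hzcc
  have hzI := outcomeComponent_subset <|
    cc_optimalSet_subset hZ.ne hYL (cc_moral_subset_cc_h0 hanc hzcc)
  rcases hzI with hzY | hzI
  · exact hZ.outcome_notMem hAancY (hzY ▸ hz)
  · exact hZ.disjoint_ignore.notMem_of_mem_left hz hzI

theorem GAC.notMem_cc_of_parents_subset (hD : Acyclic D) (hAancY : ReflTransGen D A Y)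
    (hZ : GAC D A Y L N Z) (hN : parents D (cn D A Y) \ forb D A Y ⊆ N) (hz : z ∈ Z) :
    z ∉ cc (moral D (anc D ({Y, z} ∪ ({A} ∪ optimalSet D A Y L N))))
      ({A} ∪ optimalSet D A Y L N) Y := by
  have hYL : Y ∉ L := notMem_subset hZ.superset (hZ.outcome_notMem hAancY)
  have hzF : z ∉ forb D A Y := hZ.disjoint_forb.notMem_of_mem_left hz
  have hdesc : ({Y, z} ∪ ({A} ∪ optimalSet D A Y L N)) ∩ desc D (cn D A Y) ⊆ {Y} := by
    rintro w ⟨(rfl | rfl) | rfl | hw, hwF⟩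
    · rfl
    · exact absurd (desc_cn_subset_forb hwF) hzF
    · exact absurd hwF (treatment_notMem_desc_cn hD)
    · exact absurd (desc_cn_subset_forb hwF) (hZ.optimalSet_subset hD hAancY hw).2.2
  intro hzcc
  exact hzF <| cn_subset_forb <| cc_moral_subset_cn hD hZ.ne hAancY hYL hN
    (anc_inter_desc_cn_subset_cn hD hdesc) hzcc

theorem GAC.dSep_sdiff_optimalSet (hD : Acyclic D) (hAancY : ReflTransGen D A Y)
    (hZ : GAC D A Y L N Z) (hN : N ⊆ ancAYL D A Y L ∨ parents D (cn D A Y) \ forb D A Y ⊆ N) :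
    DSep D {Y} (Z \ optimalSet D A Y L N) ({A} ∪ optimalSet D A Y L N) := by
  have hY : Y ∉ {A} ∪ optimalSet D A Y L N := not_or.2 ⟨hZ.ne.symm, outcome_notMem_optimalSet⟩
  have hdisj : Disjoint (Z \ optimalSet D A Y L N) ({A} ∪ optimalSet D A Y L N) :=
    Set.disjoint_left.2 fun v hv => not_or.2 ⟨fun h => hZ.treatment_notMem (h ▸ hv.1), hv.2⟩
  rw [dSep_iff_forall_notMem_cc_moral hD (disjoint_singleton_left.2 hY) hdisj]
  simp only [mem_singleton_iff, forall_eq]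
  exact fun z hz => hN.elim (fun hN => hZ.notMem_cc_of_subset_ancAYL hD hAancY hN hz.1)
    fun hN => hZ.notMem_cc_of_parents_subset hD hAancY hN hz.1

end Adjustment

theorem stmt11_general {V : Type*} (D : V → V → Prop) (hacy : Acyclic D) (A Y : V) (L N : Set V)
    (hAancY : ReflTransGen D A Y) (hadm : Admissible D A Y L N) :
    GAC D A Y L N ((H1 D A Y L N).neighborSet Y) ∧
    ((N ⊆ ancAYL D A Y L ∨ parents D (cn D A Y) \ forb D A Y ⊆ N) →
      ∀ Z, GAC D A Y L N Z →
        DSep D {Y} (Z \ (H1 D A Y L N).neighborSet Y)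
          ({A} ∪ (H1 D A Y L N).neighborSet Y) ∧
        DSep D {A} ((H1 D A Y L N).neighborSet Y \ Z) Z) := by
  obtain ⟨Z₀, hZ₀⟩ := hadm
  exact ⟨hZ₀.gac_optimalSet hacy hAancY, fun hN Z hZ =>
    ⟨hZ.dSep_sdiff_optimalSet hacy hAancY hN, hZ.dSep_optimalSet_sdiff hacy hAancY⟩⟩

/-- Theorem 2, part 1 (statement 11): if `(L, N)` is admissible then
`O = nb_{H¹}(Y)` satisfies the graphical adjustment criterion; if moreover
`N ⊆ an_G({A,Y} ∪ L)` or `N = V`, then for every `Z` satisfying the criterion,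
`Y ⊥⊥_G Z \ O | {A} ∪ O` and `A ⊥⊥_G O \ Z | Z`. -/
theorem stmt11 {V : Type*} [Fintype V] [DecidableEq V]
    (D : V → V → Prop) (hacy : Acyclic D)
    (A Y : V) (L N : Set V)
    (hAY : A ≠ Y) (hAancY : Relation.ReflTransGen D A Y)
    (hLnd : L ∩ desc D {A} = ∅) (hLY : Y ∉ L)
    (hN : {A, Y} ∪ L ⊆ N)
    (hadm : Admissible D A Y L N) :
    GAC D A Y L N ((H1 D A Y L N).neighborSet Y) ∧
    ((N ⊆ ancAYL D A Y L ∨ N = Set.univ) →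
      ∀ Z, GAC D A Y L N Z →
        DSep D {Y} (Z \ (H1 D A Y L N).neighborSet Y)
          ({A} ∪ (H1 D A Y L N).neighborSet Y) ∧
        DSep D {A} ((H1 D A Y L N).neighborSet Y \ Z) Z) :=
  have h := stmt11_general D hacy A Y L N hAancY hadm
  ⟨h.1, fun hNV => h.2 (hNV.imp_right fun (hV : N = univ) => hV ▸ subset_univ _)⟩

end CausalGraph
end

section
/- Let H be a finite undirected simple graph, let A and Y be distinct non-adjacent vertices of H, and let V be a vertex of H with V ∉ {A,Y}. Let H' be the graph obtained from H by adding the edges A–V and V–Y (those not already present). Then the minimum cardinality of an A–Y cut in H' equals the minimum cardinality of an A–Y cut in H if and only if there exists a minimum A–Y cut Z of H with V ∈ Z. -/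
open Relation Set

namespace CausalGraph

/-! Adding edges at a vertex `v` does not affect the paths avoiding `v`, while the new path
`A – v – Y` can only be met at `v`. So the cuts of the enlarged graph are exactly the cuts of `H`
that contain `v`, and the two minimum costs agree iff the minimum over all cuts of `H` is attained
at a cut containing `v`. -/

theorem sInf_image_eq_sInf_image_iff_of_subset {α β : Type*} [ConditionallyCompleteLinearOrderBot β]
    [WellFoundedLT β] {f : α → β} {s t : Set α} (hst : s ⊆ t) (hs : s.Nonempty) :
    sInf (f '' s) = sInf (f '' t) ↔ ∃ x ∈ s, ∀ y ∈ t, f x ≤ f y := by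
  constructor
  · intro h
    obtain ⟨x, hxs, hx⟩ := csInf_mem (hs.image f)
    refine ⟨x, hxs, fun y hy => ?_⟩
    rw [hx, h]
    exact csInf_le' (mem_image_of_mem f hy)
  · rintro ⟨x, hxs, hmin⟩
    have least_t : IsLeast (f '' t) (f x) :=
      ⟨mem_image_of_mem f (hst hxs), forall_mem_image.2 hmin⟩
    have least_s : IsLeast (f '' s) (f x) :=
      ⟨mem_image_of_mem f hxs, fun _ hb => least_t.2 (image_mono hst hb)⟩
    rw [least_s.csInf_eq, least_t.csInf_eq]

section Cuts

variable {V : Type*} {Vs Z : Set V} {G H K : SimpleGraph V} {A Y v : V}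

theorem IsPath.exists_adj_mem {Adj : V → V → Prop} {u w : V} {p : List V}
    (hp : IsPath Adj u w p) (huw : u ≠ w) : ∃ x ∈ p, Adj u x := by
  obtain ⟨hchain, hhead, hlast, -⟩ := hp
  match p with
  | [] => simp at hhead
  | [a] => exact absurd (Option.some.inj (hhead.symm.trans hlast)) huw
  | a :: b :: _ =>
    obtain rfl : a = u := Option.some.inj hhead
    exact ⟨b, by simp, (List.isChain_cons_cons.1 hchain).1⟩

theorem IsPath.imp_of_mem {R S : V → V → Prop} {u w : V} {p : List V} (hp : IsPath R u w p)
    (h : ∀ ⦃x y⦄, x ∈ p → y ∈ p → R x y → S x y) : IsPath S u w p :=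
  ⟨List.IsChain.imp_of_mem_imp h hp.1, hp.2⟩

theorem isPath_triple {Adj : V → V → Prop} {u x w : V} (hux : Adj u x) (hxw : Adj x w)
    (hnodup : [u, x, w].Nodup) : IsPath Adj u w [u, x, w] :=
  ⟨.cons_cons hux (List.isChain_pair.2 hxw), rfl, rfl, hnodup⟩

theorem IsCut.left_notMem (hZ : IsCut Vs H A Y Z) : A ∉ Z :=
  fun hA => (hZ.2.1.subset ⟨hA, by simp⟩ : A ∈ (∅ : Set V))

theorem IsCut.right_notMem (hZ : IsCut Vs H A Y Z) : Y ∉ Z :=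
  fun hY => (hZ.2.1.subset ⟨hY, by simp⟩ : Y ∈ (∅ : Set V))

theorem IsCut.of_adj_imp (hZ : IsCut Vs H A Y Z)
    (h : ∀ ⦃x y⦄, x ∉ Z → y ∉ Z → G.Adj x y → H.Adj x y) : IsCut Vs G A Y Z := by
  refine ⟨hZ.1, hZ.2.1, fun p hp => ?_⟩
  by_contra! havoid
  have havoid' : ∀ x ∈ p, x ∉ Z := fun x hxp hxZ => havoid x hxZ hxp
  obtain ⟨z, hzZ, hzp⟩ :=
    hZ.2.2 p (hp.imp_of_mem fun x y hx hy => h (havoid' x hx) (havoid' y hy))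
  exact havoid z hzZ hzp

theorem IsCut.anti (hZ : IsCut Vs H A Y Z) (hGH : G ≤ H) : IsCut Vs G A Y Z :=
  hZ.of_adj_imp fun _ _ _ _ hadj => hGH hadj

theorem IsCut.mem_of_adj_adj (hZ : IsCut Vs H A Y Z) (hAY : A ≠ Y) (hAv : H.Adj A v)
    (hvY : H.Adj v Y) : v ∈ Z := by
  obtain ⟨z, hzZ, hz⟩ :=
    hZ.2.2 [A, v, Y] (isPath_triple hAv hvY (by simp [hAY, hAv.ne, hvY.ne]))
  have hzA : z ≠ A := ne_of_mem_of_not_mem hzZ hZ.left_notMem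
  have hzY : z ≠ Y := ne_of_mem_of_not_mem hzZ hZ.right_notMem
  obtain rfl : z = v := by simpa [hzA, hzY] using hz
  exact hzZ

theorem isCut_compl_pair (hAY : A ≠ Y) (hnadj : ¬ H.Adj A Y) : IsCut univ H A Y {A, Y}ᶜ := by
  refine ⟨subset_univ _, compl_inter_self _, fun p hp => ?_⟩
  obtain ⟨x, hxp, hAx⟩ := hp.exists_adj_mem hAY
  have hxY : x ≠ Y := by
    rintro rfl
    exact hnadj hAx
  exact ⟨x, by simp [hAx.ne', hxY], hxp⟩

theorem isCut_sup_iff (hAY : A ≠ Y) (hAv : K.Adj A v) (hvY : K.Adj v Y)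
    (hK : ∀ ⦃x y⦄, K.Adj x y → x = v ∨ y = v) :
    IsCut Vs (H ⊔ K) A Y Z ↔ IsCut Vs H A Y Z ∧ v ∈ Z := by
  constructor
  · intro hZ
    exact ⟨hZ.anti le_sup_left, hZ.mem_of_adj_adj hAY (.inr hAv) (.inr hvY)⟩
  · rintro ⟨hZ, hvZ⟩
    refine hZ.of_adj_imp fun x y hx hy hadj => hadj.resolve_right fun hxy => ?_
    rcases hK hxy with rfl | rfl
    · exact hx hvZ
    · exact hy hvZ

theorem stmt14_general {β : Type*} [ConditionallyCompleteLinearOrderBot β] [WellFoundedLT β]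
    (cost : Set V → β) (hAY : A ≠ Y) (hnadj : ¬ H.Adj A Y) (hAv : K.Adj A v) (hvY : K.Adj v Y)
    (hK : ∀ ⦃x y⦄, K.Adj x y → x = v ∨ y = v) :
    sInf {c | ∃ Z, IsCut univ (H ⊔ K) A Y Z ∧ cost Z = c}
        = sInf {c | ∃ Z, IsCut univ H A Y Z ∧ cost Z = c}
      ↔ ∃ Z, (IsCut univ H A Y Z ∧ ∀ Z', IsCut univ H A Y Z' → cost Z ≤ cost Z') ∧ v ∈ Z := by
  simp only [isCut_sup_iff hAY hAv hvY hK, and_right_comm (c := v ∈ _)]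
  exact sInf_image_eq_sInf_image_iff_of_subset
    (s := {Z | IsCut univ H A Y Z ∧ v ∈ Z}) (t := {Z | IsCut univ H A Y Z}) (fun _ hZ => hZ.1)
    ⟨{A, Y}ᶜ, isCut_compl_pair hAY hnadj, by simp [hAv.ne', hvY.ne]⟩

end Cuts

/-- Lemma 6 (statement 14): adding the edges `A–v₀` and `v₀–Y` to `H` leaves the
minimum `A`–`Y` cut size unchanged iff some minimum `A`–`Y` cut of `H` contains
`v₀`. -/
theorem stmt14 {V : Type*} [Fintype V] [DecidableEq V]
    (H : SimpleGraph V) (A Y v₀ : V)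
    (hAY : A ≠ Y) (hnadj : ¬ H.Adj A Y) (hv₀A : v₀ ≠ A) (hv₀Y : v₀ ≠ Y) :
    (sInf {n : ℕ | ∃ Z, IsCut Set.univ
          (H ⊔ SimpleGraph.fromRel (fun x y => (x = A ∧ y = v₀) ∨ (x = v₀ ∧ y = Y)))
          A Y Z ∧ Z.ncard = n}
        = sInf {n : ℕ | ∃ Z, IsCut Set.univ H A Y Z ∧ Z.ncard = n})
      ↔ ∃ Z, MinimumCut Set.univ H A Y Z ∧ v₀ ∈ Z := by
  exact stmt14_general ncard hAY hnadj (by simp [hv₀A.symm]) (by simp [hv₀Y]) (by aesop)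

end CausalGraph
end
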